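/- For every risk profile g ∈ G the following statements are equivalent: (a) ES^g is positively homogeneous, i.e., ES^g(λX) = λES^g(X) for all X ∈ L^1 and λ ∈ (0,∞); (b) g(0) = 0 and g(p) ∈ (0,∞) for at most one p ∈ (0,1]; (c) ES^g = ES_p where p = sup{q ∈ [0,1] : g(q) = 0}. -/

import Mathlib

open MeasureTheory Set Filter

variable {Ω : Type*} [MeasurableSpace Ω]

/-- An atomless probability space: every set of positive measure has a subset of
strictly smaller positive measure. -/
def Atomless (μ : Measure Ω) : Prop :=
  ∀ A : Set Ω, MeasurableSet A → 0 < μ A →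
    ∃ B : Set Ω, MeasurableSet B ∧ B ⊆ A ∧ 0 < μ B ∧ μ B < μ A

/-- Value at Risk at level `p`: the left `p`-quantile for `p ∈ (0,1]`, the essential
infimum for `p = 0`.  Values are extended reals. -/
noncomputable def VaR (μ : Measure Ω) (X : Ω → ℝ) (p : ℝ) : EReal :=
  if p = 0 then essInf (fun ω => (X ω : EReal)) μ
  else sInf ((fun x : ℝ => (x : EReal)) '' {x : ℝ | ENNReal.ofReal p ≤ μ {ω | X ω ≤ x}})

/-- Real-valued version of the left `p`-quantile, used as the integrand of ES. -/
noncomputable def VaRr (μ : Measure Ω) (X : Ω → ℝ) (p : ℝ) : ℝ :=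
  sInf {x : ℝ | ENNReal.ofReal p ≤ μ {ω | X ω ≤ x}}

/-- Expected Shortfall at level `p`: `(1/(1-p)) ∫_p^1 VaR_q(X) dq` for `p ∈ [0,1)`,
the essential supremum for `p = 1`. -/
noncomputable def ES (μ : Measure Ω) (X : Ω → ℝ) (p : ℝ) : EReal :=
  if p = 1 then essSup (fun ω => (X ω : EReal)) μ
  else (((1 - p)⁻¹ * ∫ q in Set.Ioo p 1, VaRr μ X q : ℝ) : EReal)

/-- The `g`-adjusted Expected Shortfall, `sup_{p ∈ [0,1]} (ES_p(X) - g(p))`.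
Note that in `EReal` one has `⊤ - ⊤ = ⊥`, matching the convention `∞ - ∞ = -∞`. -/
noncomputable def adjES (μ : Measure Ω) (g : ℝ → EReal) (X : Ω → ℝ) : EReal :=
  ⨆ p ∈ Set.Icc (0:ℝ) 1, (ES μ X p - g p)

/-- The class `𝒢` of risk profiles: increasing functions `[0,1] → (-∞,∞]` that are
not identically `∞`. -/
def IsRiskProfile (g : ℝ → EReal) : Prop :=
  MonotoneOn g (Set.Icc (0:ℝ) 1) ∧ (∀ p ∈ Set.Icc (0:ℝ) 1, g p ≠ ⊥) ∧
    ∃ p ∈ Set.Icc (0:ℝ) 1, g p ≠ ⊤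

/-- Second-order stochastic dominance: `SSD μ X Y` means `X ≥_SSD Y`, i.e. every
risk-averse agent prefers `X` to `Y` (positive values are losses). -/
def SSD (μ : Measure Ω) (X Y : Ω → ℝ) : Prop :=
  ∀ u : ℝ → ℝ, Monotone u → ConcaveOn ℝ Set.univ u →
    ∫ ω, u (-(Y ω)) ∂μ ≤ ∫ ω, u (-(X ω)) ∂μ

/-- The inf-convolution of the functionals `ρ_1, …, ρ_n`. -/
noncomputable def infConv (μ : Measure Ω) {n : ℕ} (ρ : Fin n → ((Ω → ℝ) → EReal))
    (X : Ω → ℝ) : EReal :=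
  ⨅ (Y : Fin n → Ω → ℝ) (_ : (∀ i, Integrable (Y i) μ) ∧ ∀ ω, (∑ i, Y i ω) = X ω),
    ∑ i, ρ i (Y i)

/-- The class `𝒢_VaR`: risk profiles finite on `[0,1)`, left-continuous on `[0,1]`
and right-continuous at `0`. -/
def GVaRProfile (g : ℝ → EReal) : Prop :=
  IsRiskProfile g ∧ (∀ p ∈ Set.Ico (0:ℝ) 1, g p ≠ ⊤) ∧
    (∀ p ∈ Set.Ioc (0:ℝ) 1, Filter.Tendsto g (nhdsWithin p (Set.Ico 0 p)) (nhds (g p))) ∧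
    Filter.Tendsto g (nhdsWithin 0 (Set.Ioc 0 1)) (nhds (g 0))

/-- The class `𝒢_ES`: profiles in `𝒢_VaR` such that `h_g(p) = (1-p)g(p)` is concave
on `(0,1)` and left-continuous at `1` (with `h_g(1) = 0` by the convention `0·∞ = 0`). -/
def GESProfile (g : ℝ → EReal) : Prop :=
  GVaRProfile g ∧ ConcaveOn ℝ (Set.Ioo (0:ℝ) 1) (fun p => (1 - p) * (g p).toReal) ∧
    Filter.Tendsto (fun p => (1 - p) * (g p).toReal) (nhdsWithin 1 (Set.Ico (0:ℝ) 1)) (nhds 0)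

/-!
Positive homogeneity is tested by scaling. Comparing `ES^g(lX)` with `l ES^g(X)` as `l → ∞` makes
every finite penalty negligible, so `ES^g ≥ ES_q` whenever `g(q) < ∞`. As `l → 0`, a positive
penalty at `p` outweighs whatever a bounded `X` could gain from the levels above `p`, so
`ES^g(X) ≤ ES_p(X)`. If `p < q`, the indicator of an event of probability less than `1 - p`
satisfies `ES_p < ES_q`, so `0 < g(p)` and `g(q) < ∞` exclude each other.

Conversely, a profile with `g(0) = 0` and at most one value in `(0, ∞)` vanishes below some level
`s` and is infinite above it. Its value at `s` is irrelevant, because `ES` is increasing and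
left-continuous in the level; both facts are read off from the quantile function, which has on
`(0, 1)` the same law as `X`.
-/

open ProbabilityTheory Topology

section TailAverage

variable {f : ℝ → ℝ} {a b p : ℝ}

lemma setAverage_le_of_forall_le {α : Type*} [MeasurableSpace α] {μ : Measure α} {s : Set α}
    {f : α → ℝ} {c : ℝ} (hs : MeasurableSet s) (h0 : μ s ≠ 0) (hfin : μ s ≠ ⊤)
    (hf : IntegrableOn f s μ) (hfc : ∀ x ∈ s, f x ≤ c) : ⨍ x in s, f x ∂μ ≤ c :=
  (convex_Iic c).set_average_mem isClosed_Iic h0 hfin (ae_restrict_of_forall_mem hs hfc) hf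

lemma le_setAverage_of_forall_le {α : Type*} [MeasurableSpace α] {μ : Measure α} {s : Set α}
    {f : α → ℝ} {c : ℝ} (hs : MeasurableSet s) (h0 : μ s ≠ 0) (hfin : μ s ≠ ⊤)
    (hf : IntegrableOn f s μ) (hfc : ∀ x ∈ s, c ≤ f x) : c ≤ ⨍ x in s, f x ∂μ :=
  (convex_Ici c).set_average_mem isClosed_Ici h0 hfin (ae_restrict_of_forall_mem hs hfc) hf

lemma coe_average_le_essSup {α : Type*} [MeasurableSpace α] {μ : Measure α} [IsFiniteMeasure μ]
    [NeZero μ] {f : α → ℝ} (hf : Integrable f μ) :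
    ((⨍ x, f x ∂μ : ℝ) : EReal) ≤ essSup (fun x => (f x : EReal)) μ := by
  refine EReal.le_of_forall_lt_iff_le.1 fun c hc => EReal.coe_le_coe_iff.2 ?_
  refine (convex_Iic c).average_mem isClosed_Iic ?_ hf
  filter_upwards [ae_lt_of_essSup_lt hc] with x hx using EReal.coe_le_coe_iff.1 hx.le

lemma le_setAverage_Ioo_of_monotoneOn (hf : MonotoneOn f (Ioo a b))
    (hint : IntegrableOn f (Ioo a b)) (hp : p ∈ Ioo a b) : f p ≤ ⨍ x in Ioo p b, f x :=
  le_setAverage_of_forall_le measurableSet_Ioo (by simp [hp.2]) (by simp)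
    (hint.mono_set (Ioo_subset_Ioo_left hp.1.le))
    fun _ hx => hf hp ⟨hp.1.trans hx.1, hx.2⟩ hx.1.le

-- Raising `p` to `q` discards the values on `(p, q]`, all of them at most `f q`.
lemma monotoneOn_setAverage_Ioo (hf : MonotoneOn f (Ioo a b)) (hint : IntegrableOn f (Ioo a b)) :
    MonotoneOn (fun p => ⨍ x in Ioo p b, f x) (Ico a b) := by
  intro p hp q hq hpq
  obtain rfl | hlt := hpq.eq_or_lt
  · exact le_rfl
  have hqI : q ∈ Ioo a b := ⟨hp.1.trans_lt hlt, hq.2⟩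
  have hsub : Ioc p q ⊆ Ioo a b := fun x hx => ⟨hp.1.trans_lt hx.1, hx.2.trans_lt hq.2⟩
  have head_le : ⨍ x in Ioc p q, f x ≤ f q :=
    setAverage_le_of_forall_le measurableSet_Ioc (by simp [hlt]) (by simp) (hint.mono_set hsub)
      fun x hx => hf (hsub hx) hqI hx.2
  have head_le_tail := head_le.trans (le_setAverage_Ioo_of_monotoneOn hf hint hqI)
  have hdisj : Disjoint (Ioc p q) (Ioo q b) :=
    disjoint_left.2 fun x hx hx' => hx.2.not_gt hx'.1
  have hsegment : ⨍ x in Ioo p b, f x ∈ segment ℝ (⨍ x in Ioc p q, f x) (⨍ x in Ioo q b, f x) := by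
    rw [← Ioc_union_Ioo_eq_Ioo hpq hq.2]
    exact average_union_mem_segment hdisj.aedisjoint measurableSet_Ioo.nullMeasurableSet
      (by simp) (by simp) (hint.mono_set hsub)
      (hint.mono_set (Ioo_subset_Ioo_left hq.1))
  exact (segment_subset_Icc head_le_tail hsegment).2

lemma setAverage_Ioo_eq_inv_mul (f : ℝ → ℝ) (hp : p ≤ b) :
    ⨍ x in Ioo p b, f x = (b - p)⁻¹ * ∫ x in Ioo p b, f x := by
  rw [setAverage_eq, Real.volume_real_Ioo_of_le hp, smul_eq_mul]

lemma continuousAt_setAverage_Ioo (hint : IntegrableOn f (Ioo a b)) (hp : p ∈ Ioo a b) :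
    ContinuousAt (fun p => ⨍ x in Ioo p b, f x) p := by
  have hab : a ≤ b := (hp.1.trans hp.2).le
  have hprim : ContinuousOn (fun x => ∫ t in x..b, f t) (uIcc a b) :=
    intervalIntegral.continuousOn_primitive_interval_left <| by
      rwa [uIcc_of_le hab, integrableOn_Icc_iff_integrableOn_Ioo]
  rw [uIcc_of_le hab] at hprim
  have hquot : ContinuousAt (fun x => (b - x)⁻¹ * ∫ t in x..b, f t) p :=
    (ContinuousAt.inv₀ (by fun_prop) (sub_pos.2 hp.2).ne').mul
      (hprim.continuousAt (Icc_mem_nhds hp.1 hp.2))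
  refine hquot.congr ?_
  filter_upwards [Iio_mem_nhds hp.2] with x hx
  rw [setAverage_Ioo_eq_inv_mul f (le_of_lt hx), intervalIntegral.integral_of_le (le_of_lt hx),
    integral_Ioc_eq_integral_Ioo]

end TailAverage

section Quantile

lemma csInf_superlevel_le_iff (F : StieltjesFunction ℝ) {u x : ℝ} (hne : {y | u ≤ F y}.Nonempty)
    (hbdd : BddBelow {y | u ≤ F y}) : sInf {y | u ≤ F y} ≤ x ↔ u ≤ F x := by
  refine ⟨fun h => ?_, fun h => csInf_le hbdd h⟩
  have hright : Tendsto F (𝓝[>] x) (𝓝 (F x)) :=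
    (F.right_continuous x).mono_left (nhdsWithin_mono _ Ioi_subset_Ici_self)
  refine ge_of_tendsto hright ?_
  filter_upwards [self_mem_nhdsWithin] with y hy
  obtain ⟨z, hz, hzy⟩ := exists_lt_of_csInf_lt hne (h.trans_lt hy)
  exact hz.trans (F.mono hzy.le)

variable {μ : Measure Ω} {X : Ω → ℝ}

lemma VaRr_const_mul (μ : Measure Ω) (X : Ω → ℝ) {l : ℝ} (hl : 0 < l) (u : ℝ) :
    VaRr μ (fun ω => l * X ω) u = l * VaRr μ X u := by
  unfold VaRr
  rw [← smul_eq_mul, ← Real.sInf_smul_of_nonneg hl.le]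
  congr 1
  ext x
  simp only [mem_smul_set_iff_inv_smul_mem₀ hl.ne', mem_ofPred_eq, smul_eq_mul, le_inv_mul_iff₀ hl]

variable [IsProbabilityMeasure μ]

lemma VaRr_le_iff (hX : AEMeasurable X μ) {u : ℝ} (hu : u ∈ Ioo (0 : ℝ) 1) {x : ℝ} :
    VaRr μ X u ≤ x ↔ u ≤ μ.real {ω | X ω ≤ x} := by
  have := Measure.isProbabilityMeasure_map hX
  set F := cdf (μ.map X)
  have hF : ∀ y, μ.real {ω | X ω ≤ y} = F y := fun y => by
    rw [cdf_eq_real, map_measureReal_apply_of_aemeasurable hX measurableSet_Iic]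
    rfl
  have hVaR : VaRr μ X u = sInf {y | u ≤ F y} := by
    simp only [VaRr, ENNReal.ofReal_le_iff_le_toReal (measure_ne_top _ _), ← measureReal_def, hF]
  obtain ⟨y, hy⟩ := ((tendsto_cdf_atTop (μ.map X)).eventually (eventually_gt_nhds hu.2)).exists
  obtain ⟨z, hz⟩ := ((tendsto_cdf_atBot (μ.map X)).eventually (eventually_lt_nhds hu.1)).exists
  rw [hVaR, hF]
  exact csInf_superlevel_le_iff F ⟨y, hy.le⟩
    ⟨z, fun w hw => (F.mono.reflect_lt (hz.trans_le hw)).le⟩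

lemma monotoneOn_VaRr (hX : AEMeasurable X μ) : MonotoneOn (VaRr μ X) (Ioo 0 1) :=
  fun _ hu _ hv huv => (VaRr_le_iff hX hu).2 (huv.trans ((VaRr_le_iff hX hv).1 le_rfl))

lemma aemeasurable_VaRr (hX : AEMeasurable X μ) :
    AEMeasurable (VaRr μ X) (volume.restrict (Ioo 0 1)) :=
  aemeasurable_restrict_of_monotoneOn measurableSet_Ioo (monotoneOn_VaRr hX)

lemma identDistrib_VaRr (hX : AEMeasurable X μ) :
    IdentDistrib (VaRr μ X) X (volume.restrict (Ioo 0 1)) μ where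
  aemeasurable_fst := aemeasurable_VaRr hX
  aemeasurable_snd := hX
  map_eq := by
    refine Measure.ext_of_Iic _ _ fun x => ?_
    have hsublevel : VaRr μ X ⁻¹' Iic x =ᵐ[volume.restrict (Ioo 0 1)]
        Iic (μ.real {ω | X ω ≤ x}) := by
      filter_upwards [ae_restrict_mem measurableSet_Ioo] with u hu
      exact propext (VaRr_le_iff hX hu)
    calc (volume.restrict (Ioo 0 1)).map (VaRr μ X) (Iic x)
        = volume.restrict (Ioo 0 1) (Iic (μ.real {ω | X ω ≤ x})) := by
          rw [Measure.map_apply_of_aemeasurable (aemeasurable_VaRr hX) measurableSet_Iic,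
            measure_congr hsublevel]
      _ = volume (Ioc 0 (μ.real {ω | X ω ≤ x})) := by
          rw [Measure.restrict_congr_set Ioo_ae_eq_Ioc, Measure.restrict_apply measurableSet_Iic,
            inter_comm, Ioc_inter_Iic, min_eq_right measureReal_le_one]
      _ = μ.map X (Iic x) := by
          rw [Real.volume_Ioc, sub_zero, ofReal_measureReal,
            Measure.map_apply_of_aemeasurable hX measurableSet_Iic]
          rfl

lemma integrableOn_VaRr (hX : Integrable X μ) : IntegrableOn (VaRr μ X) (Ioo 0 1) :=
  (identDistrib_VaRr hX.aemeasurable).integrable_iff.2 hX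

lemma measureReal_indicator_one_le {A : Set Ω} (hA : MeasurableSet A) (c : ℝ) :
    μ.real {ω | A.indicator (1 : Ω → ℝ) ω ≤ c} =
      if c < 0 then 0 else if c < 1 then 1 - μ.real A else 1 := by
  have hsublevel : {ω | A.indicator (1 : Ω → ℝ) ω ≤ c} =
      if c < 0 then ∅ else if c < 1 then Aᶜ else univ := by
    ext ω
    by_cases hω : ω ∈ A <;> split_ifs <;> simp [hω] <;> linarith
  rw [hsublevel]
  split_ifs <;> simp [probReal_compl_eq_one_sub hA]

lemma VaRr_indicator_one {A : Set Ω} (hA : MeasurableSet A) {u : ℝ} (hu : u ∈ Ioo (0 : ℝ) 1) :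
    VaRr μ (A.indicator 1) u = (Ioi (1 - μ.real A)).indicator 1 u := by
  refine eq_of_forall_ge_iff fun c => ?_
  rw [VaRr_le_iff (measurable_one.indicator hA).aemeasurable hu, measureReal_indicator_one_le hA,
    indicator_apply]
  simp only [mem_Ioi, Pi.one_apply]
  grind

end Quantile

section ExpectedShortfall

variable {μ : Measure Ω} {X : Ω → ℝ} {A : Set Ω} {p : ℝ}

lemma ES_one (μ : Measure Ω) (X : Ω → ℝ) : ES μ X 1 = essSup (fun ω => (X ω : EReal)) μ :=
  if_pos rfl

lemma ES_of_lt_one (μ : Measure Ω) (X : Ω → ℝ) (hp : p < 1) :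
    ES μ X p = ((⨍ q in Ioo p 1, VaRr μ X q : ℝ) : EReal) := by
  rw [ES, if_neg hp.ne, setAverage_Ioo_eq_inv_mul _ hp.le]

lemma ES_const_mul (μ : Measure Ω) [NeZero μ] (X : Ω → ℝ) {l : ℝ} (hl : 0 < l) (p : ℝ) :
    ES μ (fun ω => l * X ω) p = l * ES μ X p := by
  unfold ES
  split_ifs with hp
  · simp only [EReal.coe_mul]
    exact EReal.limsup_const_mul_of_nonneg_of_ne_top (EReal.coe_nonneg.2 hl.le)
      (EReal.coe_ne_top l)
  · simp only [VaRr_const_mul μ X hl, integral_const_mul]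
    rw [← EReal.coe_mul, mul_left_comm]

lemma ES_zero (μ : Measure Ω) [NeZero μ] (p : ℝ) : ES μ (fun _ => 0) p = 0 := by
  obtain rfl | hp := eq_or_ne p 1
  · simp [ES_one]
  · have hVaR : VaRr μ (fun _ => 0) = 0 := funext fun u => by
      have hdouble := VaRr_const_mul μ (fun _ => 0) two_pos u
      simp only [mul_zero] at hdouble
      simp only [Pi.zero_apply]
      linarith
    simp [ES, hp, hVaR]

lemma ES_one_indicator_one (hpos : 0 < μ.real A) : ES μ (A.indicator 1) 1 = 1 := by
  rw [ES_one]
  refine le_antisymm (essSup_le_of_ae_le 1 (.of_forall fun ω => ?_))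
    (le_limsup_of_frequently_le ?_)
  · exact EReal.coe_le_coe_iff.2 (indicator_le_self' (fun _ _ => zero_le_one) ω)
  · have hA : ∃ᶠ ω in ae μ, ω ∈ A :=
      frequently_ae_mem_iff.2 (ENNReal.toReal_pos_iff.1 hpos).1.ne'
    exact hA.mono fun ω hω => by simp [hω]

variable [IsProbabilityMeasure μ]

lemma ES_one_eq_essSup_VaRr (hX : AEMeasurable X μ) :
    ES μ X 1 = essSup (fun u => (VaRr μ X u : EReal)) (volume.restrict (Ioo 0 1)) := by
  rw [ES_one]
  exact ((identDistrib_VaRr hX).comp measurable_coe_real_ereal).essSup_eq.symm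

lemma ES_le_ES_one (hX : Integrable X μ) (hp : p ∈ Ico (0 : ℝ) 1) : ES μ X p ≤ ES μ X 1 := by
  have : NeZero (volume.restrict (Ioo p 1)) := ⟨by simp [hp.2]⟩
  rw [ES_of_lt_one μ X hp.2, ES_one_eq_essSup_VaRr hX.aemeasurable]
  have hsub : Ioo p 1 ⊆ Ioo 0 1 := Ioo_subset_Ioo_left hp.1
  exact (coe_average_le_essSup ((integrableOn_VaRr hX).mono_set hsub)).trans
    (essSup_mono_measure' (Measure.restrict_mono hsub le_rfl))

lemma monotoneOn_ES (hX : Integrable X μ) : MonotoneOn (ES μ X) (Icc 0 1) := by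
  intro p hp q hq hpq
  obtain rfl | hlt := hpq.eq_or_lt
  · exact le_rfl
  obtain rfl | hq1 := hq.2.eq_or_lt
  · exact ES_le_ES_one hX ⟨hp.1, hlt⟩
  · rw [ES_of_lt_one μ X (hlt.trans hq1), ES_of_lt_one μ X hq1, EReal.coe_le_coe_iff]
    exact monotoneOn_setAverage_Ioo (monotoneOn_VaRr hX.aemeasurable) (integrableOn_VaRr hX)
      ⟨hp.1, hlt.trans hq1⟩ ⟨hq.1, hq1⟩ hpq

lemma VaRr_le_ES (hX : Integrable X μ) (hp : p ∈ Ioo (0 : ℝ) 1) : VaRr μ X p ≤ ES μ X p := by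
  rw [ES_of_lt_one μ X hp.2, EReal.coe_le_coe_iff]
  exact le_setAverage_Ioo_of_monotoneOn (monotoneOn_VaRr hX.aemeasurable) (integrableOn_VaRr hX) hp

lemma continuousAt_ES (hX : Integrable X μ) (hp : p ∈ Ioo (0 : ℝ) 1) :
    ContinuousAt (ES μ X) p := by
  refine (continuous_coe_real_ereal.continuousAt.comp
    (continuousAt_setAverage_Ioo (integrableOn_VaRr hX) hp)).congr ?_
  filter_upwards [Iio_mem_nhds hp.2] with r hr using (ES_of_lt_one μ X hr).symm

lemma ES_le_of_forall_lt (hX : Integrable X μ) (hp : p ∈ Ioc (0 : ℝ) 1) {c : EReal}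
    (h : ∀ r ∈ Ico 0 p, ES μ X r ≤ c) : ES μ X p ≤ c := by
  obtain rfl | hp1 := hp.2.eq_or_lt
  · rw [ES_one_eq_essSup_VaRr hX.aemeasurable]
    exact essSup_le_of_ae_le c <| ae_restrict_of_forall_mem measurableSet_Ioo fun u hu =>
      (VaRr_le_ES hX hu).trans (h u ⟨hu.1.le, hu.2⟩)
  · refine le_of_tendsto ((continuousAt_ES hX ⟨hp.1, hp1⟩).mono_left nhdsWithin_le_nhds :
      Tendsto (ES μ X) (𝓝[<] p) (𝓝 (ES μ X p))) ?_
    filter_upwards [Ioo_mem_nhdsLT hp.1] with r hr using h r ⟨hr.1.le, hr.2⟩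

lemma setIntegral_VaRr_indicator_one (hA : MeasurableSet A) (hp : p ∈ Ico (0 : ℝ) 1) :
    ∫ u in Ioo p 1, VaRr μ (A.indicator 1) u = min (1 - p) (μ.real A) := by
  have hinter : Ioo p 1 ∩ Ioi (1 - μ.real A) = Ioo (max p (1 - μ.real A)) 1 := by
    ext u
    simp only [mem_inter_iff, mem_Ioo, mem_Ioi, max_lt_iff]
    tauto
  have hle : max p (1 - μ.real A) ≤ 1 := max_le hp.2.le (sub_le_self 1 measureReal_nonneg)
  rw [setIntegral_congr_fun measurableSet_Ioo fun u hu =>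
      VaRr_indicator_one hA ⟨hp.1.trans_lt hu.1, hu.2⟩,
    integral_indicator_one measurableSet_Ioi, measureReal_restrict_apply measurableSet_Ioi,
    inter_comm, hinter, Real.volume_real_Ioo_of_le hle, ← min_sub_sub_left, sub_sub_cancel]

lemma ES_indicator_one (hA : MeasurableSet A) (hp : p ∈ Ico (0 : ℝ) 1) :
    ES μ (A.indicator 1) p = (min 1 (μ.real A / (1 - p)) : ℝ) := by
  have hp' : 0 < 1 - p := sub_pos.2 hp.2
  rw [ES, if_neg hp.2.ne, setIntegral_VaRr_indicator_one hA hp, ← div_eq_inv_mul,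
    ← min_div_div_right hp'.le, div_self hp'.ne']

lemma ES_indicator_one_lt {q : ℝ} (hA : MeasurableSet A) (hpos : 0 < μ.real A)
    (hsmall : μ.real A < 1 - p) (hp : 0 ≤ p) (hpq : p < q) (hq : q ≤ 1) :
    ES μ (A.indicator 1) p < ES μ (A.indicator 1) q := by
  have hp' : 0 < 1 - p := hpos.trans hsmall
  have hlt_one : μ.real A / (1 - p) < 1 := (div_lt_one hp').2 hsmall
  rw [ES_indicator_one hA ⟨hp, sub_pos.1 hp'⟩, min_eq_right hlt_one.le]
  obtain rfl | hq1 := hq.eq_or_lt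
  · rw [ES_one_indicator_one hpos]
    exact_mod_cast hlt_one
  · rw [ES_indicator_one hA ⟨hp.trans hpq.le, hq1⟩, EReal.coe_lt_coe_iff]
    exact lt_min hlt_one (div_lt_div_of_pos_left hpos (sub_pos.2 hq1) (by linarith))

end ExpectedShortfall

section SmallEvents

/-- The measure `μ` takes arbitrarily small positive values. This weakening of atomlessness also
covers, for instance, measures carried by infinitely many atoms. -/
def HasSmallEvents (μ : Measure Ω) : Prop :=
  ∀ ε : ℝ, 0 < ε → ∃ A : Set Ω, MeasurableSet A ∧ 0 < μ.real A ∧ μ.real A < ε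

variable {μ : Measure Ω} [IsFiniteMeasure μ]

lemma Atomless.exists_measureReal_le_half (hμ : Atomless μ) {A : Set Ω} (hA : MeasurableSet A)
    (hpos : 0 < μ.real A) :
    ∃ B : Set Ω, MeasurableSet B ∧ 0 < μ.real B ∧ μ.real B ≤ μ.real A / 2 := by
  obtain ⟨B, hB, hBA, hB0, hBlt⟩ := hμ A hA (ENNReal.toReal_pos_iff.1 hpos).1
  have hBpos : 0 < μ.real B := ENNReal.toReal_pos hB0.ne' (measure_ne_top μ B)
  have hBltA : μ.real B < μ.real A := ENNReal.toReal_strict_mono (measure_ne_top μ A) hBlt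
  have hdiff : μ.real (A \ B) = μ.real A - μ.real B := measureReal_sdiff hBA hB
  obtain hhalf | hhalf := le_total (μ.real B) (μ.real A / 2)
  · exact ⟨B, hB, hBpos, hhalf⟩
  · exact ⟨A \ B, hA.diff hB, by linarith, by linarith⟩

lemma Atomless.hasSmallEvents [NeZero μ] (hμ : Atomless μ) : HasSmallEvents μ := by
  intro ε hε
  have hpow : ∀ n : ℕ, ∃ A : Set Ω, MeasurableSet A ∧ 0 < μ.real A ∧
      μ.real A ≤ μ.real univ * (1 / 2) ^ n := by
    intro n
    induction n with
    | zero => exact ⟨univ, .univ, measureReal_univ_pos, by simp⟩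
    | succ n ih =>
      obtain ⟨A, hA, hpos, hle⟩ := ih
      obtain ⟨B, hB, hBpos, hBle⟩ := hμ.exists_measureReal_le_half hA hpos
      exact ⟨B, hB, hBpos, by rw [pow_succ]; linarith⟩
  obtain ⟨n, hn⟩ := exists_pow_lt_of_lt_one (div_pos hε (measureReal_univ_pos (μ := μ)))
    one_half_lt_one
  obtain ⟨A, hA, hpos, hle⟩ := hpow n
  exact ⟨A, hA, hpos, hle.trans_lt ((lt_div_iff₀' measureReal_univ_pos).1 hn)⟩

end SmallEvents

section RiskProfile

/-- The condition on a risk profile that it takes a value in `(0, ∞)` at no more than one level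
in `(0, 1]`. -/
def AtMostOneFinitePenalty (g : ℝ → EReal) : Prop :=
  ∀ p ∈ Ioc (0 : ℝ) 1, ∀ q ∈ Ioc (0 : ℝ) 1,
    (0 < g p ∧ g p ≠ ⊤) → (0 < g q ∧ g q ≠ ⊤) → p = q

/-- The level up to which a risk profile charges no penalty. It is meant for `g 0 = 0`; when `g`
vanishes nowhere on `[0, 1]` it has the junk value `sSup ∅ = 0`. -/
noncomputable def zeroLevel (g : ℝ → EReal) : ℝ :=
  sSup {q ∈ Icc (0 : ℝ) 1 | g q = 0}

variable {g : ℝ → EReal} {r : ℝ}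

lemma le_zeroLevel (hr : r ∈ Icc (0 : ℝ) 1) (hgr : g r = 0) : r ≤ zeroLevel g :=
  le_csSup ⟨1, fun _ hq => hq.1.2⟩ ⟨hr, hgr⟩

lemma zeroLevel_mem_Icc (h0 : g 0 = 0) : zeroLevel g ∈ Icc (0 : ℝ) 1 :=
  have h0I : (0 : ℝ) ∈ Icc (0 : ℝ) 1 := left_mem_Icc.2 zero_le_one
  ⟨le_zeroLevel h0I h0, csSup_le ⟨0, h0I, h0⟩ fun _ hq => hq.1.2⟩

lemma eq_zero_of_lt_zeroLevel (hg : MonotoneOn g (Icc 0 1)) (h0 : g 0 = 0) (hr : 0 ≤ r)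
    (hlt : r < zeroLevel g) : g r = 0 := by
  have h0I : (0 : ℝ) ∈ Icc (0 : ℝ) 1 := left_mem_Icc.2 zero_le_one
  have hne : {q ∈ Icc (0 : ℝ) 1 | g q = 0}.Nonempty := ⟨0, h0I, h0⟩
  obtain ⟨t, ⟨ht, hgt⟩, hrt⟩ := exists_lt_of_lt_csSup hne hlt
  have hrI : r ∈ Icc (0 : ℝ) 1 := ⟨hr, hrt.le.trans ht.2⟩
  exact le_antisymm ((hg hrI ht hrt.le).trans_eq hgt) (h0.symm.trans_le (hg h0I hrI hr))

lemma pos_of_zeroLevel_lt (hg : MonotoneOn g (Icc 0 1)) (h0 : g 0 = 0) (hlt : zeroLevel g < r)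
    (hr : r ≤ 1) : 0 < g r := by
  have hrI : r ∈ Icc (0 : ℝ) 1 := ⟨(zeroLevel_mem_Icc h0).1.trans hlt.le, hr⟩
  have hnonneg : 0 ≤ g r := h0.symm.trans_le (hg (left_mem_Icc.2 zero_le_one) hrI hrI.1)
  exact hnonneg.lt_of_ne fun hgr => (le_zeroLevel hrI hgr.symm).not_gt hlt

lemma AtMostOneFinitePenalty.eq_top_of_zeroLevel_lt (hfin : AtMostOneFinitePenalty g)
    (hg : MonotoneOn g (Icc 0 1)) (h0 : g 0 = 0) (hlt : zeroLevel g < r) (hr : r ≤ 1) :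
    g r = ⊤ := by
  by_contra hgr
  obtain ⟨t, hst, htr⟩ := exists_between hlt
  have ht0 : 0 < t := (zeroLevel_mem_Icc h0).1.trans_lt hst
  have htr1 : t ≤ 1 := htr.le.trans hr
  have hgt : g t ≠ ⊤ := ne_top_of_le_ne_top hgr (hg ⟨ht0.le, htr1⟩ ⟨(ht0.trans htr).le, hr⟩ htr.le)
  exact htr.ne <| hfin t ⟨ht0, htr1⟩ r ⟨ht0.trans htr, hr⟩
    ⟨pos_of_zeroLevel_lt hg h0 hst htr1, hgt⟩ ⟨pos_of_zeroLevel_lt hg h0 hlt hr, hgr⟩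

end RiskProfile

section AdjustedExpectedShortfall

/-- Positive homogeneity of a functional on `L¹(μ)`. -/
def PosHomogeneous (μ : Measure Ω) (ρ : (Ω → ℝ) → EReal) : Prop :=
  ∀ X : Ω → ℝ, Integrable X μ → ∀ l : ℝ, 0 < l → ρ (fun ω => l * X ω) = (l : EReal) * ρ X

variable {μ : Measure Ω} {g : ℝ → EReal} {X : Ω → ℝ} {p q : ℝ}

lemma ES_sub_le_adjES (μ : Measure Ω) (g : ℝ → EReal) (X : Ω → ℝ) (hp : p ∈ Icc (0 : ℝ) 1) :
    ES μ X p - g p ≤ adjES μ g X :=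
  le_iSup₂_of_le p hp le_rfl

lemma adjES_zero [NeZero μ] (hg : MonotoneOn g (Icc 0 1)) : adjES μ g (fun _ => 0) = -g 0 := by
  have h0 : (0 : ℝ) ∈ Icc (0 : ℝ) 1 := left_mem_Icc.2 zero_le_one
  simp only [adjES, ES_zero, zero_sub]
  exact le_antisymm (iSup₂_le fun r hr => EReal.neg_le_neg_iff.2 (hg h0 hr hr.1))
    (le_iSup₂_of_le 0 h0 le_rfl)

lemma IsRiskProfile.zero_eq_of_posHomogeneous [NeZero μ] (hg : IsRiskProfile g)
    (hρ : PosHomogeneous μ (adjES μ g)) : g 0 = 0 := by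
  obtain ⟨hmono, hbot, p, hp, hpt⟩ := hg
  have h0 : (0 : ℝ) ∈ Icc (0 : ℝ) 1 := left_mem_Icc.2 zero_le_one
  have hdouble := hρ (fun _ => 0) (integrable_zero _ _ _) 2 two_pos
  simp only [mul_zero, adjES_zero hmono] at hdouble
  have hg0t : g 0 ≠ ⊤ := ne_top_of_le_ne_top hpt (hmono h0 hp hp.1)
  lift g 0 to ℝ using ⟨hg0t, hbot 0 h0⟩ with γ
  norm_cast at hdouble ⊢
  linarith

-- `ES^g(lX) ≥ l ES_q(X) - g(q)` for every `l`; dividing by `l → ∞` removes `g(q)`.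
lemma PosHomogeneous.ES_le_adjES [NeZero μ] (hρ : PosHomogeneous μ (adjES μ g))
    (hX : Integrable X μ) (hq : q ∈ Icc (0 : ℝ) 1) (hgq : g q ≠ ⊤) : ES μ X q ≤ adjES μ g X := by
  refine EReal.ge_of_forall_gt_iff_ge.1 fun c hc => ?_
  obtain ⟨δ, hδ, -⟩ := EReal.lt_iff_exists_real_btwn.1 hgq.lt_top
  have hscaled : ∀ l : ℝ, 0 < l → ((l * c - δ : ℝ) : EReal) ≤ l * adjES μ g X := fun l hl =>
    calc ((l * c - δ : ℝ) : EReal) = l * c - δ := by push_cast; rfl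
      _ ≤ l * ES μ X q - g q :=
        EReal.sub_le_sub (mul_le_mul_of_nonneg_left hc.le (EReal.coe_nonneg.2 hl.le)) hδ.le
      _ = ES μ (fun ω => l * X ω) q - g q := by rw [ES_const_mul μ X hl]
      _ ≤ adjES μ g (fun ω => l * X ω) := ES_sub_le_adjES μ g _ hq
      _ = l * adjES μ g X := hρ X hX l hl
  generalize adjES μ g X = ρX at hscaled ⊢
  induction ρX with
  | bot =>
    have hbot := hscaled 1 one_pos
    rw [EReal.coe_mul_bot_of_pos one_pos, le_bot_iff] at hbot
    exact absurd hbot (EReal.coe_ne_bot _)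
  | top => exact le_top
  | coe z =>
    have hscaled' : ∀ l : ℝ, 0 < l → l * c - δ ≤ l * z := fun l hl => mod_cast hscaled l hl
    rw [EReal.coe_le_coe_iff]
    by_contra! hzc
    have hgap : 0 < c - z := sub_pos.2 hzc
    have hl := hscaled' ((|δ| + 1) / (c - z)) (by positivity)
    have hcancel : (|δ| + 1) / (c - z) * (c - z) = |δ| + 1 := div_mul_cancel₀ _ hgap.ne'
    linarith [le_abs_self δ]

variable [IsProbabilityMeasure μ]

lemma adjES_const_mul_le_ES (hX : Integrable X μ) (hg : MonotoneOn g (Icc 0 1))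
    (hg0 : 0 ≤ g 0) (hp : p ∈ Icc (0 : ℝ) 1) {l : ℝ} (hl : 0 < l)
    (hpenalty : l * ES μ X 1 - g p ≤ l * ES μ X p) :
    adjES μ g (fun ω => l * X ω) ≤ l * ES μ X p := by
  have hl0 : (0 : EReal) ≤ l := EReal.coe_nonneg.2 hl.le
  refine iSup₂_le fun r hr => ?_
  rw [ES_const_mul μ X hl]
  obtain hrp | hpr := le_total r p
  · have hgr : 0 ≤ g r := hg0.trans (hg (left_mem_Icc.2 zero_le_one) hr hr.1)
    calc l * ES μ X r - g r ≤ l * ES μ X p - 0 :=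
          EReal.sub_le_sub (mul_le_mul_of_nonneg_left (monotoneOn_ES hX hr hp hrp) hl0) hgr
      _ = l * ES μ X p := sub_zero _
  · have hone : (1 : ℝ) ∈ Icc (0 : ℝ) 1 := right_mem_Icc.2 zero_le_one
    exact (EReal.sub_le_sub (mul_le_mul_of_nonneg_left (monotoneOn_ES hX hr hone hr.2) hl0)
      (hg hp hr hpr)).trans hpenalty

-- For `l` small, the penalty `g ≥ g(p) > 0` on `[p, 1]` outweighs any gain over `l ES_p(X)`.
lemma PosHomogeneous.adjES_le_ES (hρ : PosHomogeneous μ (adjES μ g)) (hX : Integrable X μ)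
    (hbdd : ES μ X 1 ≠ ⊤) (hg : MonotoneOn g (Icc 0 1)) (hg0 : 0 ≤ g 0)
    (hp : p ∈ Ico (0 : ℝ) 1) (hgp : 0 < g p) : adjES μ g X ≤ ES μ X p := by
  obtain ⟨e, he⟩ : ∃ e : ℝ, ES μ X p = e := ⟨_, ES_of_lt_one μ X hp.2⟩
  obtain ⟨M, hM, -⟩ := EReal.lt_iff_exists_real_btwn.1 hbdd.lt_top
  obtain ⟨γ, hγ0, hγ⟩ := EReal.lt_iff_exists_real_btwn.1 hgp
  have heM : e ≤ M := EReal.coe_le_coe_iff.1 (he ▸ (ES_le_ES_one hX hp).trans hM.le)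
  have hγ0' : 0 < γ := EReal.coe_pos.1 hγ0
  obtain ⟨l, hl, hlM⟩ : ∃ l : ℝ, 0 < l ∧ l * (M - e) ≤ γ := by
    have hden : 0 < M - e + 1 := by linarith
    refine ⟨γ / (M - e + 1), by positivity, ?_⟩
    rw [div_mul_eq_mul_div, div_le_iff₀ hden]
    nlinarith
  have hpenalty : l * ES μ X 1 - g p ≤ l * ES μ X p :=
    calc l * ES μ X 1 - g p ≤ l * M - γ :=
          EReal.sub_le_sub (mul_le_mul_of_nonneg_left hM.le (EReal.coe_nonneg.2 hl.le)) hγ.le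
      _ = ((l * M - γ : ℝ) : EReal) := by push_cast; rfl
      _ ≤ ((l * e : ℝ) : EReal) := EReal.coe_le_coe_iff.2 (by linarith)
      _ = l * ES μ X p := by rw [he, EReal.coe_mul]
  have hscaled := adjES_const_mul_le_ES hX hg hg0 (Ico_subset_Icc_self hp) hl hpenalty
  rw [hρ X hX l hl, he] at hscaled
  rw [he]
  refine EReal.ge_of_forall_gt_iff_ge.1 fun c hc => ?_
  have hlc : (l : EReal) * c ≤ l * e :=
    (mul_le_mul_of_nonneg_left hc.le (EReal.coe_nonneg.2 hl.le)).trans hscaled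
  exact EReal.coe_le_coe_iff.2 (le_of_mul_le_mul_left (mod_cast hlc) hl)

lemma PosHomogeneous.eq_top_of_lt (hρ : PosHomogeneous μ (adjES μ g)) (hμ : HasSmallEvents μ)
    (hg : MonotoneOn g (Icc 0 1)) (hg0 : 0 ≤ g 0) (hp : 0 ≤ p) (hpq : p < q) (hq : q ≤ 1)
    (hgp : 0 < g p) : g q = ⊤ := by
  by_contra hgq
  obtain ⟨A, hA, hpos, hsmall⟩ := hμ (1 - p) (by linarith)
  have hX : Integrable (A.indicator (1 : Ω → ℝ)) μ := (integrable_const 1).indicator hA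
  have hbdd : ES μ (A.indicator 1) 1 ≠ ⊤ := by
    rw [ES_one_indicator_one hpos]
    exact EReal.coe_ne_top 1
  exact (ES_indicator_one_lt hA hpos hsmall hp hpq hq).not_ge <|
    (hρ.ES_le_adjES hX ⟨hp.trans hpq.le, hq⟩ hgq).trans
      (hρ.adjES_le_ES hX hbdd hg hg0 ⟨hp, hpq.trans_le hq⟩ hgp)

lemma PosHomogeneous.atMostOneFinitePenalty (hρ : PosHomogeneous μ (adjES μ g))
    (hμ : HasSmallEvents μ) (hg : MonotoneOn g (Icc 0 1)) (hg0 : 0 ≤ g 0) :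
    AtMostOneFinitePenalty g := by
  intro p hp q hq ⟨hgp, hgpt⟩ ⟨hgq, hgqt⟩
  obtain hpq | hpq | hqp := lt_trichotomy p q
  · exact absurd (hρ.eq_top_of_lt hμ hg hg0 hp.1.le hpq hq.2 hgp) hgqt
  · exact hpq
  · exact absurd (hρ.eq_top_of_lt hμ hg hg0 hq.1.le hqp hp.2 hgq) hgpt

lemma adjES_eq_ES {s : ℝ} (hX : Integrable X μ) (hs : s ∈ Icc (0 : ℝ) 1)
    (hnonneg : ∀ r ∈ Icc 0 1, 0 ≤ g r) (h0 : g 0 = 0) (hzero : ∀ r ∈ Ico 0 s, g r = 0)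
    (htop : ∀ r ∈ Ioc s 1, g r = ⊤) : adjES μ g X = ES μ X s := by
  refine le_antisymm (iSup₂_le fun r hr => ?_) ?_
  · obtain hrs | hsr := le_or_gt r s
    · calc ES μ X r - g r ≤ ES μ X s - 0 :=
            EReal.sub_le_sub (monotoneOn_ES hX hr hs hrs) (hnonneg r hr)
        _ = ES μ X s := sub_zero _
    · rw [htop r ⟨hsr, hr.2⟩, EReal.sub_top]
      exact bot_le
  · have hlower : ∀ r ∈ Icc (0 : ℝ) 1, g r = 0 → ES μ X r ≤ adjES μ g X := fun r hr hgr => by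
      simpa only [hgr, sub_zero] using ES_sub_le_adjES μ g X hr
    obtain rfl | hs0 := hs.1.eq_or_lt
    · exact hlower 0 hs h0
    · exact ES_le_of_forall_lt hX ⟨hs0, hs.2⟩ fun r hr =>
        hlower r ⟨hr.1, hr.2.le.trans hs.2⟩ (hzero r hr)

lemma adjES_eq_ES_zeroLevel (hg : MonotoneOn g (Icc 0 1)) (h0 : g 0 = 0)
    (hfin : AtMostOneFinitePenalty g) (hX : Integrable X μ) :
    adjES μ g X = ES μ X (zeroLevel g) :=
  adjES_eq_ES hX (zeroLevel_mem_Icc h0)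
    (fun _ hr => h0.symm.trans_le (hg (left_mem_Icc.2 zero_le_one) hr hr.1)) h0
    (fun _ hr => eq_zero_of_lt_zeroLevel hg h0 hr.1 hr.2)
    fun _ hr => hfin.eq_top_of_zeroLevel_lt hg h0 hr.1 hr.2

end AdjustedExpectedShortfall

theorem stmt5_general (μ : Measure Ω) [IsProbabilityMeasure μ] (hμ : HasSmallEvents μ)
    (g : ℝ → EReal) (hg : IsRiskProfile g) :
    (PosHomogeneous μ (adjES μ g) ↔ g 0 = 0 ∧ AtMostOneFinitePenalty g) ∧
    (g 0 = 0 ∧ AtMostOneFinitePenalty g ↔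
      ∀ X : Ω → ℝ, Integrable X μ → adjES μ g X = ES μ X (zeroLevel g)) := by
  have profile_of_homogeneous (h : PosHomogeneous μ (adjES μ g)) :
      g 0 = 0 ∧ AtMostOneFinitePenalty g :=
    have h0 := hg.zero_eq_of_posHomogeneous h
    ⟨h0, h.atMostOneFinitePenalty hμ hg.1 h0.ge⟩
  have eq_ES_of_profile (h : g 0 = 0 ∧ AtMostOneFinitePenalty g) (X : Ω → ℝ)
      (hX : Integrable X μ) : adjES μ g X = ES μ X (zeroLevel g) :=
    adjES_eq_ES_zeroLevel hg.1 h.1 h.2 hX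
  have homogeneous_of_eq_ES
      (h : ∀ X : Ω → ℝ, Integrable X μ → adjES μ g X = ES μ X (zeroLevel g)) :
      PosHomogeneous μ (adjES μ g) := fun X hX l hl => by
    rw [h _ (hX.const_mul l), h X hX, ES_const_mul μ X hl]
  exact ⟨⟨profile_of_homogeneous, fun h => homogeneous_of_eq_ES (eq_ES_of_profile h)⟩,
    ⟨eq_ES_of_profile, fun h => profile_of_homogeneous (homogeneous_of_eq_ES h)⟩⟩

/-- For every risk profile `g ∈ 𝒢`, the following are equivalent:
(a) `ES^g` is positively homogeneous; (b) `g(0) = 0` and `g(p) ∈ (0,∞)` for at most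
one `p ∈ (0,1]`; (c) `ES^g = ES_p` where `p = sup {q ∈ [0,1] : g(q) = 0}`. -/
theorem stmt5 (μ : Measure Ω) [IsProbabilityMeasure μ] (hatomless : Atomless μ)
    (g : ℝ → EReal) (hg : IsRiskProfile g) :
    ((∀ X : Ω → ℝ, Integrable X μ → ∀ l : ℝ, 0 < l →
        adjES μ g (fun ω => l * X ω) = (l : EReal) * adjES μ g X)
      ↔ (g 0 = 0 ∧ ∀ p ∈ Set.Ioc (0:ℝ) 1, ∀ q ∈ Set.Ioc (0:ℝ) 1,
            (0 < g p ∧ g p ≠ ⊤) → (0 < g q ∧ g q ≠ ⊤) → p = q)) ∧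
    ((g 0 = 0 ∧ ∀ p ∈ Set.Ioc (0:ℝ) 1, ∀ q ∈ Set.Ioc (0:ℝ) 1,
            (0 < g p ∧ g p ≠ ⊤) → (0 < g q ∧ g q ≠ ⊤) → p = q)
      ↔ (∀ X : Ω → ℝ, Integrable X μ →
            adjES μ g X = ES μ X (sSup {q ∈ Set.Icc (0:ℝ) 1 | g q = 0}))) :=
  stmt5_general μ hatomless.hasSmallEvents g hg
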